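/- arXiv:1601.07345 — 2 statements merged into one kernel-verified Lean document; each statement's English description precedes it below -/
import Mathlib

section
/- Let p₁, p₂ : (0,∞)×(0,∞) → ℝ be differentiable pressure laws. Fix U = (α₁, m₁, m₂, q₁, q₂, Ē₁, Ē₂) ∈ ℝ⁷ with α₁ ∈ (0,1), m₁, m₂ > 0, and set α₂ = 1−α₁, ρ_k = m_k/α_k, u_k = q_k/m_k, e_k = Ē_k/m_k − q_k²/(2m_k²). Define the flux 𝓕 : V ↦ (0, m₁u₁, m₂u₂, m₁u₁² + α₁p₁(ρ₁,e₁), m₂u₂² + α₂p₂(ρ₂,e₂), (Ē₁+α₁p₁(ρ₁,e₁))u₁, (Ē₂+α₂p₂(ρ₂,e₂))u₂) (same formulas applied to a generic point V in a neighborhood of U), and let 𝓒(U) be the 7×7 matrix whose first column is (u₂, 0, 0, −p₁, p₁, −p₁u₂, p₁u₂) (with p₁ = p₁(ρ₁,e₁)) and all other columns zero. Then the characteristic polynomial of the 7×7 matrix A = D𝓕(U) + 𝓒(U) equals (X−u₂)²(X−u₁)((X−u₁)²−c₁²)((X−u₂)²−c₂²), where c_k² := ∂_ρ p_k(ρ_k,e_k)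 + (p_k(ρ_k,e_k)/ρ_k²) ∂_e p_k(ρ_k,e_k). In particular u₂ (with multiplicity two), u₁, and, when c_k² ≥ 0 with c_k = √(c_k²), u₁ ± c₁ and u₂ ± c₂ are the eigenvalues of A. -/
open Polynomial

noncomputable section

/-- The Baer-Nunziato flux `𝓕`, written in the conservative variables
`V = (α₁, α₁ρ₁, α₂ρ₂, α₁ρ₁u₁, α₂ρ₂u₂, α₁ρ₁E₁, α₂ρ₂E₂)`. -/
def BNflux (p₁ p₂ : ℝ → ℝ → ℝ) (V : Fin 7 → ℝ) : Fin 7 → ℝ :=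
  let α₁ := V 0
  let α₂ := 1 - V 0
  let ρ₁ := V 1 / α₁
  let ρ₂ := V 2 / α₂
  let u₁ := V 3 / V 1
  let u₂ := V 4 / V 2
  let e₁ := V 5 / V 1 - (V 3) ^ 2 / (2 * (V 1) ^ 2)
  let e₂ := V 6 / V 2 - (V 4) ^ 2 / (2 * (V 2) ^ 2)
  ![0,
    V 1 * u₁,
    V 2 * u₂,
    V 1 * u₁ ^ 2 + α₁ * p₁ ρ₁ e₁,
    V 2 * u₂ ^ 2 + α₂ * p₂ ρ₂ e₂,
    (V 5 + α₁ * p₁ ρ₁ e₁) * u₁,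
    (V 6 + α₂ * p₂ ρ₂ e₂) * u₂]

/-- The non-conservative matrix `𝓒(U)`: its first column is
`(u₂, 0, 0, −p₁, p₁, −p₁u₂, p₁u₂)` and all other columns vanish. -/
def BNnc (pv u₂ : ℝ) : Matrix (Fin 7) (Fin 7) ℝ :=
  Matrix.of fun i j =>
    if j = 0 then (![u₂, 0, 0, -pv, pv, -pv * u₂, pv * u₂] : Fin 7 → ℝ) i else 0

/-!
In the order `(α₁; m₁, q₁, Ē₁; m₂, q₂, Ē₂)` of the variables, phase `k` only sees its own
conservative variables and `α_k`, and the equation for `α₁` is a transport equation. So `A` is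
block triangular, with diagonal blocks the interfacial velocity and, for each phase, the Jacobian of
the Euler flux at frozen volume fraction, whose characteristic polynomial is
`(X − u_k)((X − u_k)² − c_k²)`. The entries of `𝓒(U)` proportional to the interfacial pressure lie
below the diagonal blocks and do not contribute.
-/

namespace BaerNunziato

section Calculus

variable {𝕜 E : Type*} [NontriviallyNormedField 𝕜] [NormedAddCommGroup E] [NormedSpace 𝕜 E]
  {g h : E → 𝕜} {g' h' : E →L[𝕜] 𝕜} {x : E}

theorem hasFDerivAt_div (hg : HasFDerivAt g g' x) (hh : HasFDerivAt h h' x) (hx : h x ≠ 0) :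
    HasFDerivAt (fun y => g y / h y) ((h x)⁻¹ • (g' - (g x / h x) • h')) x := by
  have hinv : HasFDerivAt (fun y => (h y)⁻¹) (-(h x ^ 2)⁻¹ • h') x :=
    (hasDerivAt_inv hx).comp_hasFDerivAt x hh
  simp only [div_eq_mul_inv]
  refine (hg.fun_mul hinv).congr_fderiv ?_
  match_scalars <;> field_simp

theorem hasFDerivAt_comp₂_of_differentiableAt {F : Type*} [NormedAddCommGroup F] [NormedSpace 𝕜 F]
    {f : 𝕜 → 𝕜 → F} (hf : DifferentiableAt 𝕜 (fun q : 𝕜 × 𝕜 => f q.1 q.2) (g x, h x))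
    (hg : HasFDerivAt g g' x) (hh : HasFDerivAt h h' x) :
    HasFDerivAt (fun y => f (g y) (h y))
      (g'.smulRight (deriv (fun s => f s (h x)) (g x))
        + h'.smulRight (deriv (fun t => f (g x) t) (h x))) x := by
  have hf' := hf.hasFDerivAt
  have hfst : HasDerivAt (fun s => f s (h x)) _ (g x) :=
    hf'.comp_hasDerivAt (f := fun s => (s, h x)) (g x)
      ((hasDerivAt_id _).prodMk (hasDerivAt_const _ _))
  have hsnd : HasDerivAt (fun t => f (g x) t) _ (h x) :=
    hf'.comp_hasDerivAt (f := fun t => (g x, t)) (h x)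
      ((hasDerivAt_const _ _).prodMk (hasDerivAt_id _))
  rw [hfst.deriv, hsnd.deriv]
  refine (hf'.comp (f := fun y => (g y, h y)) x (hg.prodMk hh)).congr_fderiv ?_
  ext v
  have hv : (g' v, h' v) = g' v • ((1 : 𝕜), (0 : 𝕜)) + h' v • ((0 : 𝕜), (1 : 𝕜)) := by simp
  simp [hv, -Prod.smul_mk, -Prod.mk_add_mk]

end Calculus

section EulerMatrix

open Matrix

variable {R : Type*} [CommRing R]

/-- The Jacobian of the one-dimensional Euler flux in the variables (mass, momentum, energy), in
terms of the velocity `u`, the specific total enthalpy `H`, the Grüneisen coefficient `Γ` and the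
squared speed of sound `csq`. -/
def eulerMatrix (u H Γ csq : R) : Matrix (Fin 3) (Fin 3) R :=
  !![0, 1, 0;
    csq - Γ * (H - u ^ 2) - u ^ 2, (2 - Γ) * u, Γ;
    u * (csq - Γ * (H - u ^ 2) - H), H - Γ * u ^ 2, (1 + Γ) * u]

theorem map_eulerMatrix {S : Type*} [CommRing S] (f : R →+* S) (u H Γ csq : R) :
    f.mapMatrix (eulerMatrix u H Γ csq) = eulerMatrix (f u) (f H) (f Γ) (f csq) := by
  ext i j
  fin_cases i <;> fin_cases j <;> simp [eulerMatrix, map_ofNat f 2]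

theorem det_scalar_sub_eulerMatrix (t u H Γ csq : R) :
    (scalar (Fin 3) t - eulerMatrix u H Γ csq).det = (t - u) * ((t - u) ^ 2 - csq) := by
  simp only [scalar_apply, eulerMatrix, det_fin_three, Matrix.sub_apply, diagonal_apply, of_apply,
    cons_val, Fin.reduceEq, if_true, if_false]
  ring

theorem charpoly_eulerMatrix (u H Γ csq : R) :
    (eulerMatrix u H Γ csq).charpoly = (X - C u) * ((X - C u) ^ 2 - C csq) := by
  rw [charpoly, charmatrix, map_eulerMatrix, det_scalar_sub_eulerMatrix]

end EulerMatrix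

section Phase

/-- The squared speed of sound `c² = ∂_ρ p + (p / ρ²) ∂_e p` of the pressure law `p`. -/
def soundSpeedSq (p : ℝ → ℝ → ℝ) (ρ e : ℝ) : ℝ :=
  deriv (fun r => p r e) ρ + p ρ e / ρ ^ 2 * deriv (fun e => p ρ e) e

/-- The Grüneisen coefficient `Γ = (1 / ρ) ∂_e p` of the pressure law `p`. -/
def gruneisen (p : ℝ → ℝ → ℝ) (ρ e : ℝ) : ℝ :=
  deriv (fun e => p ρ e) e / ρ

/-- The velocity of a phase with conservative variables `w = (m, q, Ē)` (mass, momentum and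
energy per unit volume of the mixture). -/
def velocity (w : Fin 3 → ℝ) : ℝ :=
  w 1 / w 0

/-- The specific internal energy of a phase with conservative variables `w`. -/
def internalEnergy (w : Fin 3 → ℝ) : ℝ :=
  w 2 / w 0 - (w 1) ^ 2 / (2 * (w 0) ^ 2)

/-- The pressure of a phase with volume fraction `α` and conservative variables `w`. -/
def pressure (p : ℝ → ℝ → ℝ) (α : ℝ) (w : Fin 3 → ℝ) : ℝ :=
  p (w 0 / α) (internalEnergy w)

/-- The specific total enthalpy of a phase with volume fraction `α` and conservative
variables `w`. -/
def totalEnthalpy (p : ℝ → ℝ → ℝ) (α : ℝ) (w : Fin 3 → ℝ) : ℝ :=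
  (w 2 + α * pressure p α w) / w 0

/-- The mass, momentum and energy fluxes of a phase with volume fraction `α` and conservative
variables `w`. -/
def phaseFlux (p : ℝ → ℝ → ℝ) (α : ℝ) (w : Fin 3 → ℝ) : Fin 3 → ℝ :=
  ![w 0 * velocity w,
    w 0 * velocity w ^ 2 + α * pressure p α w,
    (w 2 + α * pressure p α w) * velocity w]

/-- The quantity `p − ρ ∂_ρ p`, which is the derivative of `α * pressure p α w` with respect to the
volume fraction `α`. -/
def pressureDefect (p : ℝ → ℝ → ℝ) (α : ℝ) (w : Fin 3 → ℝ) : ℝ :=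
  pressure p α w - w 0 / α * deriv (fun r => p r (internalEnergy w)) (w 0 / α)

/-- The derivative of `phaseFlux` with respect to the volume fraction, at frozen `w`. -/
def phaseFluxFractionDeriv (p : ℝ → ℝ → ℝ) (α : ℝ) (w : Fin 3 → ℝ) : Fin 3 → ℝ :=
  ![0, pressureDefect p α w, velocity w * pressureDefect p α w]

/-- The Jacobian matrix of `phaseFlux` with respect to `w` at frozen volume fraction. -/
def phaseJacobian (p : ℝ → ℝ → ℝ) (α : ℝ) (w : Fin 3 → ℝ) : Matrix (Fin 3) (Fin 3) ℝ :=
  eulerMatrix (velocity w) (totalEnthalpy p α w) (gruneisen p (w 0 / α) (internalEnergy w))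
    (soundSpeedSq p (w 0 / α) (internalEnergy w))

theorem internalEnergy_eq_sub_velocity_sq (w : Fin 3 → ℝ) :
    internalEnergy w = w 2 / w 0 - velocity w ^ 2 / 2 := by
  rw [internalEnergy, velocity, div_pow, div_div, mul_comm 2]

variable {E : Type*} [NormedAddCommGroup E] [NormedSpace ℝ E] {p : ℝ → ℝ → ℝ}
  {α : E → ℝ} {α' : E →L[ℝ] ℝ} {w : E → Fin 3 → ℝ} {w' : Fin 3 → E →L[ℝ] ℝ} {x : E}

theorem hasFDerivAt_velocity (hw : ∀ i, HasFDerivAt (fun y => w y i) (w' i) x) (hm : w x 0 ≠ 0) :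
    HasFDerivAt (fun y => velocity (w y))
      ((w x 0)⁻¹ • (w' 1 - velocity (w x) • w' 0)) x :=
  hasFDerivAt_div (hw 1) (hw 0) hm

theorem hasFDerivAt_internalEnergy (hw : ∀ i, HasFDerivAt (fun y => w y i) (w' i) x)
    (hm : w x 0 ≠ 0) :
    HasFDerivAt (fun y => internalEnergy (w y))
      ((w x 0)⁻¹ • (w' 2 - velocity (w x) • w' 1
        - (w x 2 / w x 0 - velocity (w x) ^ 2) • w' 0)) x := by
  simp only [internalEnergy_eq_sub_velocity_sq, div_eq_mul_inv _ (2 : ℝ)]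
  refine ((hasFDerivAt_div (hw 2) (hw 0) hm).fun_sub
    ((hasFDerivAt_velocity hw hm |>.pow 2).mul_const (2 : ℝ)⁻¹)).congr_fderiv ?_
  match_scalars <;> field_simp <;> ring

theorem hasFDerivAt_mul_pressure (hα : HasFDerivAt α α' x)
    (hw : ∀ i, HasFDerivAt (fun y => w y i) (w' i) x) (hαx : α x ≠ 0) (hm : w x 0 ≠ 0)
    (hp : DifferentiableAt ℝ (fun q : ℝ × ℝ => p q.1 q.2)
      (w x 0 / α x, internalEnergy (w x))) :
    HasFDerivAt (fun y => α y * pressure p (α y) (w y))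
      (pressureDefect p (α x) (w x) • α'
        + (soundSpeedSq p (w x 0 / α x) (internalEnergy (w x))
            - gruneisen p (w x 0 / α x) (internalEnergy (w x))
              * (totalEnthalpy p (α x) (w x) - velocity (w x) ^ 2)) • w' 0
        - (gruneisen p (w x 0 / α x) (internalEnergy (w x)) * velocity (w x)) • w' 1
        + gruneisen p (w x 0 / α x) (internalEnergy (w x)) • w' 2) x := by
  have hP : HasFDerivAt (fun y => pressure p (α y) (w y)) _ x :=
    hasFDerivAt_comp₂_of_differentiableAt hp (hasFDerivAt_div (hw 0) hα hαx)
      (hasFDerivAt_internalEnergy hw hm)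
  refine (hα.fun_mul hP).congr_fderiv ?_
  simp only [pressureDefect, soundSpeedSq, gruneisen, totalEnthalpy, pressure]
  ext v
  simp only [add_apply, sub_apply, smul_apply, ContinuousLinearMap.smulRight_apply, smul_eq_mul]
  field_simp
  ring

theorem hasFDerivAt_phaseFlux (hα : HasFDerivAt α α' x)
    (hw : ∀ i, HasFDerivAt (fun y => w y i) (w' i) x) (hαx : α x ≠ 0) (hm : w x 0 ≠ 0)
    (hp : DifferentiableAt ℝ (fun q : ℝ × ℝ => p q.1 q.2)
      (w x 0 / α x, internalEnergy (w x))) (i : Fin 3) :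
    HasFDerivAt (fun y => phaseFlux p (α y) (w y) i)
      (phaseFluxFractionDeriv p (α x) (w x) i • α'
        + ∑ j, phaseJacobian p (α x) (w x) i j • w' j) x := by
  have hu := hasFDerivAt_velocity hw hm
  have hP := hasFDerivAt_mul_pressure hα hw hαx hm hp
  have hmass : HasFDerivAt (fun y => w y 0 * velocity (w y)) (w' 1) x := by
    refine ((hw 0).fun_mul hu).congr_fderiv ?_
    match_scalars <;> field_simp
    ring
  have hmomentum : HasFDerivAt (fun y => w y 0 * velocity (w y) ^ 2)
      ((2 * velocity (w x)) • w' 1 - velocity (w x) ^ 2 • w' 0) x := by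
    simp only [sq, ← mul_assoc]
    refine (hmass.fun_mul hu).congr_fderiv ?_
    match_scalars <;> field_simp
    ring
  have hwork := ((hw 2).fun_add hP).fun_mul hu
  rw [smul_smul, ← div_eq_mul_inv, ← totalEnthalpy] at hwork
  simp only [phaseJacobian, eulerMatrix, Fin.sum_univ_three]
  fin_cases i
  · refine hmass.congr_fderiv ?_
    simp [phaseFluxFractionDeriv]
  · refine (hmomentum.fun_add hP).congr_fderiv ?_
    simp only [phaseFluxFractionDeriv, Fin.mk_one, Matrix.of_apply, Matrix.cons_val]
    module
  · refine hwork.congr_fderiv ?_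
    simp only [phaseFluxFractionDeriv, Fin.reduceFinMk, Matrix.of_apply, Matrix.cons_val]
    module

end Phase

section Blocks

open Matrix

/-- The positions of the conservative variables of the first phase. -/
def firstPhase : Fin 3 → Fin 7 := ![1, 3, 5]

/-- The positions of the conservative variables of the second phase. -/
def secondPhase : Fin 3 → Fin 7 := ![2, 4, 6]

/-- The reordering of the conservative variables which groups them by phase, after the volume
fraction. -/
def blockEquiv : Unit ⊕ (Fin 3 ⊕ Fin 3) ≃ Fin 7 :=
  Equiv.ofBijective (Sum.elim (fun _ => 0) (Sum.elim firstPhase secondPhase)) (by decide)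

/-- The matrix which, once its indices are grouped by `blockEquiv`, is block lower triangular with
diagonal blocks `a`, `J₁`, `J₂` and with first column `(a, z₁, z₂)`. -/
def blockMatrix {R : Type*} [Zero R] (a : R) (z₁ z₂ : Fin 3 → R)
    (J₁ J₂ : Matrix (Fin 3) (Fin 3) R) : Matrix (Fin 7) (Fin 7) R :=
  reindex blockEquiv blockEquiv
    (fromBlocks (of fun _ _ => a) 0 (of fun i _ => Sum.elim z₁ z₂ i) (fromBlocks J₁ 0 0 J₂))

theorem charpoly_blockMatrix {R : Type*} [CommRing R] (a : R) (z₁ z₂ : Fin 3 → R)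
    (J₁ J₂ : Matrix (Fin 3) (Fin 3) R) :
    (blockMatrix a z₁ z₂ J₁ J₂).charpoly = (X - C a) * (J₁.charpoly * J₂.charpoly) := by
  have ha : (of fun _ _ : Unit => a).charpoly = X - C a := by simp [charpoly]
  rw [blockMatrix, charpoly_reindex, charpoly_fromBlocks_zero₁₂, charpoly_fromBlocks_zero₁₂, ha]

theorem blockMatrix_add {R : Type*} [AddZeroClass R] (a a' : R) (z₁ z₂ z₁' z₂' : Fin 3 → R)
    (J₁ J₂ J₁' J₂' : Matrix (Fin 3) (Fin 3) R) :
    blockMatrix a z₁ z₂ J₁ J₂ + blockMatrix a' z₁' z₂' J₁' J₂' =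
      blockMatrix (a + a') (z₁ + z₁') (z₂ + z₂') (J₁ + J₁') (J₂ + J₂') := by
  ext i j
  obtain ⟨k, rfl⟩ := blockEquiv.surjective i
  obtain ⟨l, rfl⟩ := blockEquiv.surjective j
  rcases k with k | k | k <;> rcases l with l | l | l <;> simp [blockMatrix]

theorem blockMatrix_mulVec_blockEquiv {R : Type*} [CommSemiring R] (a : R) (z₁ z₂ : Fin 3 → R)
    (J₁ J₂ : Matrix (Fin 3) (Fin 3) R) (v : Fin 7 → R) (k : Unit ⊕ (Fin 3 ⊕ Fin 3)) :
    (blockMatrix a z₁ z₂ J₁ J₂ *ᵥ v) (blockEquiv k) =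
      Sum.elim (fun _ => a * v 0) (Sum.elim (v 0 • z₁ + J₁ *ᵥ (v ∘ firstPhase))
        (v 0 • z₂ + J₂ *ᵥ (v ∘ secondPhase))) k := by
  have hv : v ∘ blockEquiv =
      Sum.elim (fun _ => v 0) (Sum.elim (v ∘ firstPhase) (v ∘ secondPhase)) := by
    ext (_ | _ | _) <;> rfl
  rw [blockMatrix, reindex_apply, submatrix_mulVec_equiv, Equiv.symm_symm, hv, fromBlocks_mulVec,
    Function.comp_apply, Equiv.symm_apply_apply, Sum.elim_comp_inr, fromBlocks_mulVec]
  rcases k with k | k | k <;> simp [mulVec, dotProduct, mul_comm]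

theorem BNnc_eq_blockMatrix (pI uI : ℝ) :
    BNnc pI uI = blockMatrix uI ![0, -pI, -pI * uI] ![0, pI, pI * uI] 0 0 := by
  ext i j
  obtain ⟨k, rfl⟩ := blockEquiv.surjective i
  obtain ⟨l, rfl⟩ := blockEquiv.surjective j
  rcases k with k | k | k <;> rcases l with l | l | l <;>
    fin_cases k <;> fin_cases l <;>
    simp only [blockMatrix, reindex_apply, submatrix_apply, Equiv.symm_apply_apply] <;> rfl

theorem BNflux_blockEquiv (p₁ p₂ : ℝ → ℝ → ℝ) (V : Fin 7 → ℝ) (k : Unit ⊕ (Fin 3 ⊕ Fin 3)) :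
    BNflux p₁ p₂ V (blockEquiv k) =
      Sum.elim (fun _ => 0) (Sum.elim (phaseFlux p₁ (V 0) (V ∘ firstPhase))
        (phaseFlux p₂ (1 - V 0) (V ∘ secondPhase))) k := by
  rcases k with k | k | k <;> fin_cases k <;> rfl

variable {p₁ p₂ : ℝ → ℝ → ℝ} {U : Fin 7 → ℝ}

theorem hasFDerivAt_BNflux (hα₀ : U 0 ≠ 0) (hα₁ : 1 - U 0 ≠ 0) (hm₁ : U 1 ≠ 0) (hm₂ : U 2 ≠ 0)
    (hp₁ : DifferentiableAt ℝ (fun q : ℝ × ℝ => p₁ q.1 q.2)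
      (U 1 / U 0, internalEnergy (U ∘ firstPhase)))
    (hp₂ : DifferentiableAt ℝ (fun q : ℝ × ℝ => p₂ q.1 q.2)
      (U 2 / (1 - U 0), internalEnergy (U ∘ secondPhase))) :
    HasFDerivAt (BNflux p₁ p₂)
      (toLin' (blockMatrix 0 (phaseFluxFractionDeriv p₁ (U 0) (U ∘ firstPhase))
          (-phaseFluxFractionDeriv p₂ (1 - U 0) (U ∘ secondPhase))
          (phaseJacobian p₁ (U 0) (U ∘ firstPhase))
          (phaseJacobian p₂ (1 - U 0) (U ∘ secondPhase)))).toContinuousLinearMap U := by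
  have hU : ∀ i, HasFDerivAt (fun V : Fin 7 → ℝ => V i)
      (ContinuousLinearMap.proj (R := ℝ) (φ := fun _ => ℝ) i) U :=
    fun i => hasFDerivAt_apply i U
  refine hasFDerivAt_pi'' fun i => ?_
  obtain ⟨k, rfl⟩ := blockEquiv.surjective i
  simp only [BNflux_blockEquiv]
  rcases k with k | k | k
  · refine (hasFDerivAt_const _ _).congr_fderiv ?_
    ext v
    simp [blockMatrix_mulVec_blockEquiv]
  · refine (hasFDerivAt_phaseFlux (w := fun V => V ∘ firstPhase) (hU 0)
      (fun i => hU (firstPhase i)) hα₀ hm₁ hp₁ k).congr_fderiv ?_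
    refine ContinuousLinearMap.ext fun v =>
      Eq.trans ?_ (blockMatrix_mulVec_blockEquiv _ _ _ _ _ v _).symm
    simp [mulVec, dotProduct, mul_comm]
  · refine (hasFDerivAt_phaseFlux (w := fun V => V ∘ secondPhase) ((hU 0).const_sub 1)
      (fun i => hU (secondPhase i)) hα₁ hm₂ hp₂ k).congr_fderiv ?_
    refine ContinuousLinearMap.ext fun v =>
      Eq.trans ?_ (blockMatrix_mulVec_blockEquiv _ _ _ _ _ v _).symm
    simp [mulVec, dotProduct, mul_comm]

theorem charpoly_toMatrix'_fderiv_BNflux_add_BNnc (hα₀ : U 0 ≠ 0) (hα₁ : 1 - U 0 ≠ 0)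
    (hm₁ : U 1 ≠ 0) (hm₂ : U 2 ≠ 0)
    (hp₁ : DifferentiableAt ℝ (fun q : ℝ × ℝ => p₁ q.1 q.2)
      (U 1 / U 0, internalEnergy (U ∘ firstPhase)))
    (hp₂ : DifferentiableAt ℝ (fun q : ℝ × ℝ => p₂ q.1 q.2)
      (U 2 / (1 - U 0), internalEnergy (U ∘ secondPhase))) (pI uI : ℝ) :
    (LinearMap.toMatrix' (fderiv ℝ (BNflux p₁ p₂) U : (Fin 7 → ℝ) →ₗ[ℝ] (Fin 7 → ℝ))
        + BNnc pI uI).charpoly =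
      (X - C uI) * ((phaseJacobian p₁ (U 0) (U ∘ firstPhase)).charpoly
        * (phaseJacobian p₂ (1 - U 0) (U ∘ secondPhase)).charpoly) := by
  rw [(hasFDerivAt_BNflux hα₀ hα₁ hm₁ hm₂ hp₁ hp₂).fderiv, LinearMap.coe_toContinuousLinearMap,
    LinearMap.toMatrix'_toLin', BNnc_eq_blockMatrix, blockMatrix_add, charpoly_blockMatrix,
    zero_add, add_zero, add_zero]

end Blocks

theorem sub_sq_eq_iff_of_nonneg {x u csq : ℝ} (h : 0 ≤ csq) :
    (x - u) ^ 2 = csq ↔ x = u - √csq ∨ x = u + √csq := by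
  rw [← Real.sq_sqrt h, sq_eq_sq_iff_eq_or_eq_neg, Real.sqrt_sq (Real.sqrt_nonneg _), or_comm,
    sub_eq_iff_eq_add', sub_eq_iff_eq_add', sub_eq_add_neg]

end BaerNunziato

open BaerNunziato in
/-- The interfacial pressure `pI` and velocity `uI` are arbitrary here; the model above closes the
system with `pI = p₁` and `uI = u₂`. -/
theorem bn_characteristic_polynomial_general {p₁ p₂ : ℝ → ℝ → ℝ} {U : Fin 7 → ℝ}
    (hα : U 0 ≠ 0) (hα' : U 0 ≠ 1) (hm₁ : U 1 ≠ 0) (hm₂ : U 2 ≠ 0)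
    {ρ₁ ρ₂ u₁ u₂ e₁ e₂ c₁sq c₂sq : ℝ}
    (hρ₁ : ρ₁ = U 1 / U 0) (hρ₂ : ρ₂ = U 2 / (1 - U 0))
    (hu₁ : u₁ = U 3 / U 1) (hu₂ : u₂ = U 4 / U 2)
    (he₁ : e₁ = U 5 / U 1 - (U 3) ^ 2 / (2 * (U 1) ^ 2))
    (he₂ : e₂ = U 6 / U 2 - (U 4) ^ 2 / (2 * (U 2) ^ 2))
    (hp₁ : DifferentiableAt ℝ (fun q : ℝ × ℝ => p₁ q.1 q.2) (ρ₁, e₁))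
    (hp₂ : DifferentiableAt ℝ (fun q : ℝ × ℝ => p₂ q.1 q.2) (ρ₂, e₂))
    (hc₁ : c₁sq = soundSpeedSq p₁ ρ₁ e₁) (hc₂ : c₂sq = soundSpeedSq p₂ ρ₂ e₂)
    {pI uI : ℝ} {A : Matrix (Fin 7) (Fin 7) ℝ}
    (hA : A = LinearMap.toMatrix'
        (fderiv ℝ (BNflux p₁ p₂) U : (Fin 7 → ℝ) →ₗ[ℝ] (Fin 7 → ℝ)) + BNnc pI uI) :
    A.charpoly
        = (X - C uI) * (X - C u₂) * (X - C u₁)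
          * ((X - C u₁) ^ 2 - C c₁sq) * ((X - C u₂) ^ 2 - C c₂sq)
    ∧ (0 ≤ c₁sq → 0 ≤ c₂sq →
        spectrum ℝ A = ({uI, u₂, u₁, u₁ - √c₁sq, u₁ + √c₁sq, u₂ - √c₂sq, u₂ + √c₂sq} : Set ℝ)) := by
  have hchar : A.charpoly = (X - C uI) * (X - C u₂) * (X - C u₁)
      * ((X - C u₁) ^ 2 - C c₁sq) * ((X - C u₂) ^ 2 - C c₂sq) := by
    have hJ₁ : (phaseJacobian p₁ (U 0) (U ∘ firstPhase)).charpoly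
        = (X - C u₁) * ((X - C u₁) ^ 2 - C c₁sq) := by
      rw [hc₁, hu₁, hρ₁, he₁]
      exact charpoly_eulerMatrix _ _ _ _
    have hJ₂ : (phaseJacobian p₂ (1 - U 0) (U ∘ secondPhase)).charpoly
        = (X - C u₂) * ((X - C u₂) ^ 2 - C c₂sq) := by
      rw [hc₂, hu₂, hρ₂, he₂]
      exact charpoly_eulerMatrix _ _ _ _
    rw [hρ₁, he₁] at hp₁
    rw [hρ₂, he₂] at hp₂
    rw [hA, charpoly_toMatrix'_fderiv_BNflux_add_BNnc hα (sub_ne_zero.2 hα'.symm) hm₁ hm₂ hp₁ hp₂,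
      hJ₁, hJ₂]
    ring
  refine ⟨hchar, fun h₁ h₂ => Set.ext fun x => ?_⟩
  rw [Matrix.mem_spectrum_iff_isRoot_charpoly, hchar]
  simp only [IsRoot.def, eval_mul, eval_pow, eval_sub, eval_X, eval_C, mul_eq_zero, sub_eq_zero,
    sub_sq_eq_iff_of_nonneg h₁, sub_sq_eq_iff_of_nonneg h₂, or_assoc, Set.mem_insert_iff,
    Set.mem_singleton_iff]

/-- the characteristic polynomial of `A = D𝓕(U) + 𝓒(U)` equals
`(X−u₂)²(X−u₁)((X−u₁)²−c₁²)((X−u₂)²−c₂²)`, where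
`c_k² = ∂_ρp_k + (p_k/ρ_k²)∂_ep_k`; in particular, when `c_k² ≥ 0`, the
eigenvalues of `A` are `u₂`, `u₁`, `u₁ ± c₁` and `u₂ ± c₂`. -/
theorem bn_characteristic_polynomial
    (p₁ p₂ : ℝ → ℝ → ℝ)
    (hp₁ : ∀ ρ e : ℝ, 0 < ρ → 0 < e →
      DifferentiableAt ℝ (fun q : ℝ × ℝ => p₁ q.1 q.2) (ρ, e))
    (hp₂ : ∀ ρ e : ℝ, 0 < ρ → 0 < e →
      DifferentiableAt ℝ (fun q : ℝ × ℝ => p₂ q.1 q.2) (ρ, e))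
    (U : Fin 7 → ℝ)
    (hα : 0 < U 0) (hα' : U 0 < 1) (hm₁ : 0 < U 1) (hm₂ : 0 < U 2)
    (ρ₁ ρ₂ u₁ u₂ e₁ e₂ c₁sq c₂sq : ℝ)
    (hρ₁ : ρ₁ = U 1 / U 0) (hρ₂ : ρ₂ = U 2 / (1 - U 0))
    (hu₁ : u₁ = U 3 / U 1) (hu₂ : u₂ = U 4 / U 2)
    (he₁ : e₁ = U 5 / U 1 - (U 3) ^ 2 / (2 * (U 1) ^ 2))
    (he₂ : e₂ = U 6 / U 2 - (U 4) ^ 2 / (2 * (U 2) ^ 2))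
    (he₁pos : 0 < e₁) (he₂pos : 0 < e₂)
    (hc₁ : c₁sq = deriv (fun r => p₁ r e₁) ρ₁
        + p₁ ρ₁ e₁ / ρ₁ ^ 2 * deriv (fun e => p₁ ρ₁ e) e₁)
    (hc₂ : c₂sq = deriv (fun r => p₂ r e₂) ρ₂
        + p₂ ρ₂ e₂ / ρ₂ ^ 2 * deriv (fun e => p₂ ρ₂ e) e₂)
    (A : Matrix (Fin 7) (Fin 7) ℝ)
    (hA : A = LinearMap.toMatrix'
        ((fderiv ℝ (BNflux p₁ p₂) U : (Fin 7 → ℝ) →L[ℝ] (Fin 7 → ℝ))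
          : (Fin 7 → ℝ) →ₗ[ℝ] (Fin 7 → ℝ))
        + BNnc (p₁ ρ₁ e₁) u₂) :
    A.charpoly
        = (X - C u₂) ^ 2 * (X - C u₁)
          * ((X - C u₁) ^ 2 - C c₁sq) * ((X - C u₂) ^ 2 - C c₂sq)
    ∧ (0 ≤ c₁sq → 0 ≤ c₂sq →
        spectrum ℝ A
          = ({u₂, u₁, u₁ - Real.sqrt c₁sq, u₁ + Real.sqrt c₁sq,
              u₂ - Real.sqrt c₂sq, u₂ + Real.sqrt c₂sq} : Set ℝ)) := by
  have hP₁ := hp₁ ρ₁ e₁ (hρ₁ ▸ div_pos hm₁ hα) he₁pos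
  have hP₂ := hp₂ ρ₂ e₂ (hρ₂ ▸ div_pos hm₂ (sub_pos.2 hα')) he₂pos
  simpa only [← sq, Set.insert_idem] using bn_characteristic_polynomial_general hα.ne' hα'.ne
    hm₁.ne' hm₂.ne' hρ₁ hρ₂ hu₁ hu₂ he₁ he₂ hP₁ hP₂ hc₁ hc₂ hA
end
end

section
/- Let P₁, P₂ : (0,∞)×ℝ → ℝ be differentiable and a₁, a₂ > 0. Fix W = (α₁, m₁, m₂, q₁, q₂, S₁, S₂, 𝒯̄₁, 𝒯̄₂) ∈ ℝ⁹ with α₁ ∈ (0,1), m₁, m₂ > 0, and set α₂ = 1−α₁, ρ_k = m_k/α_k, τ_k = 1/ρ_k, u_k = q_k/m_k, s_k = S_k/m_k, 𝒯_k = 𝒯̄_k/m_k, π_k = P_k(𝒯_k,s_k) + a_k²(𝒯_k − τ_k). Define the flux g : V ↦ (0, m₁u₁, m₂u₂, m₁u₁² + α₁π₁, m₂u₂² + α₂π₂, S₁u₁, S₂u₂, 𝒯̄₁u₁, 𝒯̄₂u₂) (same formulas applied to a generic V near W) and let d(W) be the 9×9 matrix whose first column is (u₂, 0, 0, −π₁,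 π₁, 0, 0, 0, 0) and all other columns zero. Then the characteristic polynomial of the 9×9 matrix A = Dg(W) + d(W) equals (X−u₂)³(X−u₁)²((X−u₁)² − a₁²τ₁²)((X−u₂)² − a₂²τ₂²); in particular the eigenvalues of A are u₂ (multiplicity 3), u₁ (multiplicity 2), u₁ ± a₁τ₁ and u₂ ± a₂τ₂, all real. -/
open Polynomial

noncomputable section

/-- The flux `g` of the homogeneous Suliciu relaxation system for the
Baer-Nunziato model, written in the conservative variables
`V = (α₁, α₁ρ₁, α₂ρ₂, α₁ρ₁u₁, α₂ρ₂u₂, α₁ρ₁s₁, α₂ρ₂s₂, α₁ρ₁𝒯₁, α₂ρ₂𝒯₂)`. -/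
def relaxFlux (P₁ P₂ : ℝ → ℝ → ℝ) (a₁ a₂ : ℝ) (V : Fin 9 → ℝ) : Fin 9 → ℝ :=
  let α₁ := V 0
  let α₂ := 1 - V 0
  let τ₁ := α₁ / V 1
  let τ₂ := α₂ / V 2
  let u₁ := V 3 / V 1
  let u₂ := V 4 / V 2
  let s₁ := V 5 / V 1
  let s₂ := V 6 / V 2
  let T₁ := V 7 / V 1
  let T₂ := V 8 / V 2
  let π₁ := P₁ T₁ s₁ + a₁ ^ 2 * (T₁ - τ₁)
  let π₂ := P₂ T₂ s₂ + a₂ ^ 2 * (T₂ - τ₂)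
  ![0,
    V 1 * u₁,
    V 2 * u₂,
    V 1 * u₁ ^ 2 + α₁ * π₁,
    V 2 * u₂ ^ 2 + α₂ * π₂,
    V 5 * u₁,
    V 6 * u₂,
    V 7 * u₁,
    V 8 * u₂]

/-- The non-conservative matrix `d(W)`: its first column is
`(u₂, 0, 0, −π₁, π₁, 0, 0, 0, 0)` and all other columns vanish. -/
def relaxNc (πv u₂ : ℝ) : Matrix (Fin 9) (Fin 9) ℝ :=
  Matrix.of fun i j =>
    if j = 0 then (![u₂, 0, 0, -πv, πv, 0, 0, 0, 0] : Fin 9 → ℝ) i else 0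

/-! Only the first column of `A` couples the phases to the volume fraction and its first row is
`(u₂, 0, …, 0)`, so the characteristic polynomial is `X - u₂` times the product of those of the
diagonal blocks of the two phases. With `α` fixed, the flux of a phase with state
`v = (m, q, S, T)` is `u(v) v + p(v) e`, where `u = q / m`, `p = α π` and `e` is the momentum
direction. Its Jacobian is therefore a perturbation `v ⊗ ∇u + e ⊗ ∇p` of rank two of `u I`, whose
characteristic polynomial reduces to that of the `2 × 2` matrix of the derivatives of `u` and `p`
along `v` and `e`. Since `u` is homogeneous of degree zero and `p` does not depend on `q`, the
diagonal of that matrix vanishes. Along `v` the arguments `T / m` and `S / m` of the pressure law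
are constant, so that `p` varies only through `-α a² τ`: the pressure law drops out, and the product
of the off-diagonal entries is `(1 / m) (α a² τ) = (a τ)²`. -/

section RankTwo

variable {n R : Type*} [Fintype n] [DecidableEq n] [CommRing R]

theorem charpoly_scalar_add_vecMulVec_add_vecMulVec (hn : 2 ≤ Fintype.card n) (c : R)
    {x y f g : n → R} (hfx : f ⬝ᵥ x = 0) (hgy : g ⬝ᵥ y = 0) :
    (Matrix.scalar n c + (Matrix.vecMulVec x f + Matrix.vecMulVec y g)).charpoly
      = (X - C c) ^ (Fintype.card n - 2) * ((X - C c) ^ 2 - C ((f ⬝ᵥ y) * (g ⬝ᵥ x))) := by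
  let U : Matrix n (Fin 2) R := Matrix.of fun i => ![x i, y i]
  let V : Matrix (Fin 2) n R := Matrix.of ![f, g]
  have hUV : Matrix.vecMulVec x f + Matrix.vecMulVec y g = U * V := by
    ext i j
    simp [U, V, Matrix.mul_apply, Matrix.vecMulVec_apply]
  have hVU : V * U = !![f ⬝ᵥ x, f ⬝ᵥ y; g ⬝ᵥ x, g ⬝ᵥ y] := by
    ext i j
    fin_cases i <;> fin_cases j <;> rfl
  have hshift : Matrix.scalar n c + U * V = U * V - Matrix.scalar n (-c) := by
    rw [map_neg, sub_neg_eq_add, add_comm]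
  rw [hUV, hshift, Matrix.charpoly_sub_scalar,
    Matrix.charpoly_mul_comm_of_le U V (by simpa using hn), hVU, hfx, hgy]
  simp [Matrix.charpoly, Matrix.det_fin_two, sub_eq_add_neg, sq]

end RankTwo

section LineDeriv

variable {𝕜 E F : Type*} [NontriviallyNormedField 𝕜] [NormedAddCommGroup E] [NormedSpace 𝕜 E]
  [NormedAddCommGroup F] [NormedSpace 𝕜 F]

theorem fderiv_apply_eq_of_hasLineDerivAt {f : E → F} {f' : F} {x w : E}
    (hf : DifferentiableAt 𝕜 f x) (h : HasLineDerivAt 𝕜 f f' x w) : fderiv 𝕜 f x w = f' :=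
  (hf.hasFDerivAt.hasLineDerivAt w).unique h

theorem fderiv_apply_comp_eq_of_line {ι κ : Type*} [Finite ι] [Finite κ]
    {g : (ι → 𝕜) → ι → 𝕜} {F : (κ → 𝕜) → κ → 𝕜} {c : κ → ι} {x w : ι → 𝕜}
    (hg : DifferentiableAt 𝕜 g x) (hF : DifferentiableAt 𝕜 F (x ∘ c))
    (h : ∀ t : 𝕜, g (x + t • w) ∘ c = F (x ∘ c + t • (w ∘ c))) :
    fderiv 𝕜 g x w ∘ c = fderiv 𝕜 F (x ∘ c) (w ∘ c) := by
  have := Fintype.ofFinite ι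
  have := Fintype.ofFinite κ
  refine (fderiv_apply_eq_of_hasLineDerivAt hF ?_).symm
  simp only [HasLineDerivAt, ← h]
  exact hasDerivAt_pi.2 fun k => hasDerivAt_pi.1 (hg.hasFDerivAt.hasLineDerivAt w) (c k)

end LineDeriv

section SingleComp

variable {ι κ M : Type*} [DecidableEq ι] [Zero M] {c : κ → ι}

theorem single_comp_of_injective [DecidableEq κ] (hc : Function.Injective c) (k : κ) (b : M) :
    (Pi.single (c k) b : ι → M) ∘ c = Pi.single k b := by
  ext l
  simp [Pi.single_apply, hc.eq_iff]

theorem single_comp_eq_zero {i : ι} (hi : ∀ k, c k ≠ i) (b : M) :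
    (Pi.single i b : ι → M) ∘ c = 0 := by
  ext l
  simp [hi l]

end SingleComp

section Transport

variable {𝕜 n : Type*} [NontriviallyNormedField 𝕜] [Fintype n] [DecidableEq n]

theorem dotProduct_fderiv_single (f : (n → 𝕜) → 𝕜) (x w : n → 𝕜) :
    (fun j => fderiv 𝕜 f x (Pi.single j 1)) ⬝ᵥ w = fderiv 𝕜 f x w := by
  conv_rhs => rw [pi_eq_sum_univ' w]
  simp [dotProduct, mul_comm]

theorem toMatrix'_fderiv_smul_id_add_smul_const {u p : (n → 𝕜) → 𝕜} {x : n → 𝕜}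
    (hu : DifferentiableAt 𝕜 u x) (hp : DifferentiableAt 𝕜 p x) (e : n → 𝕜) :
    LinearMap.toMatrix' (fderiv 𝕜 (fun y => u y • y + p y • e) x : (n → 𝕜) →ₗ[𝕜] n → 𝕜)
      = Matrix.scalar n (u x)
        + (Matrix.vecMulVec x (fun j => fderiv 𝕜 u x (Pi.single j 1))
          + Matrix.vecMulVec e (fun j => fderiv 𝕜 p x (Pi.single j 1))) := by
  have hF := (hu.hasFDerivAt.smul (hasFDerivAt_id x)).add (hp.hasFDerivAt.smul_const e)
  have hF' : fderiv 𝕜 (fun y => u y • y + p y • e) x = _ := hF.fderiv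
  ext i j
  rw [hF', LinearMap.toMatrix'_apply]
  simp [Matrix.vecMulVec_apply, Matrix.diagonal_apply, Pi.single_apply, mul_comm, add_assoc]

theorem charpoly_fderiv_smul_id_add_smul_const (hn : 2 ≤ Fintype.card n)
    {u p : (n → 𝕜) → 𝕜} {x e : n → 𝕜}
    (hu : DifferentiableAt 𝕜 u x) (hp : DifferentiableAt 𝕜 p x)
    (hux : fderiv 𝕜 u x x = 0) (hpe : fderiv 𝕜 p x e = 0) :
    (LinearMap.toMatrix'
        (fderiv 𝕜 (fun y => u y • y + p y • e) x : (n → 𝕜) →ₗ[𝕜] n → 𝕜)).charpoly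
      = (X - C (u x)) ^ (Fintype.card n - 2)
        * ((X - C (u x)) ^ 2 - C (fderiv 𝕜 u x e * fderiv 𝕜 p x x)) := by
  rw [toMatrix'_fderiv_smul_id_add_smul_const hu hp,
    charpoly_scalar_add_vecMulVec_add_vecMulVec hn, dotProduct_fderiv_single,
    dotProduct_fderiv_single]
  · rw [dotProduct_fderiv_single, hux]
  · rw [dotProduct_fderiv_single, hpe]

end Transport

section Phase

variable {𝕜 : Type*} [NontriviallyNormedField 𝕜]

/-- The velocity of a phase with state `v = (m, q, S, T)`, the conserved mass, momentum, entropy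
and relaxed volume of the phase. -/
def phaseVelocity (v : Fin 4 → 𝕜) : 𝕜 :=
  v 1 / v 0

/-- The linearized pressure of a phase with volume fraction `α` and state `v = (m, q, S, T)`,
multiplied by `α`. -/
def phasePressure (P : 𝕜 → 𝕜 → 𝕜) (a α : 𝕜) (v : Fin 4 → 𝕜) : 𝕜 :=
  α * (P (v 3 / v 0) (v 2 / v 0) + a ^ 2 * (v 3 / v 0 - α / v 0))

/-- The flux of a single phase: the state is transported by its velocity, and the pressure acts on
the momentum, which has index `1`. -/
def phaseFlux (P : 𝕜 → 𝕜 → 𝕜) (a α : 𝕜) (v : Fin 4 → 𝕜) : Fin 4 → 𝕜 :=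
  phaseVelocity v • v + phasePressure P a α v • Pi.single 1 1

variable {P : 𝕜 → 𝕜 → 𝕜} {a α : 𝕜} {v : Fin 4 → 𝕜}

theorem differentiableAt_phaseVelocity (hm : v 0 ≠ 0) :
    DifferentiableAt 𝕜 phaseVelocity v := by
  unfold phaseVelocity
  fun_prop (disch := assumption)

theorem differentiableAt_phasePressure (hm : v 0 ≠ 0)
    (hP : DifferentiableAt 𝕜 (fun q : 𝕜 × 𝕜 => P q.1 q.2) (v 3 / v 0, v 2 / v 0)) :
    DifferentiableAt 𝕜 (fun z : 𝕜 × (Fin 4 → 𝕜) => phasePressure P a z.1 z.2) (α, v) := by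
  have hPv : DifferentiableAt 𝕜
      (fun z : 𝕜 × (Fin 4 → 𝕜) => P (z.2 3 / z.2 0) (z.2 2 / z.2 0)) (α, v) :=
    hP.comp (α, v) (f := fun z : 𝕜 × (Fin 4 → 𝕜) => (z.2 3 / z.2 0, z.2 2 / z.2 0))
      (by fun_prop (disch := assumption))
  exact differentiableAt_fst.mul (hPv.add (by fun_prop (disch := assumption)))

theorem differentiableAt_phaseFlux (hm : v 0 ≠ 0)
    (hP : DifferentiableAt 𝕜 (fun q : 𝕜 × 𝕜 => P q.1 q.2) (v 3 / v 0, v 2 / v 0)) :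
    DifferentiableAt 𝕜 (fun z : 𝕜 × (Fin 4 → 𝕜) => phaseFlux P a z.1 z.2) (α, v) := by
  have hu : DifferentiableAt 𝕜 (fun z : 𝕜 × (Fin 4 → 𝕜) => phaseVelocity z.2) (α, v) :=
    (differentiableAt_phaseVelocity hm).comp (α, v) (f := Prod.snd) differentiableAt_snd
  exact (hu.smul differentiableAt_snd).add
    ((differentiableAt_phasePressure hm hP).smul_const _)

theorem differentiableAt_phaseFlux_right (hm : v 0 ≠ 0)
    (hP : DifferentiableAt 𝕜 (fun q : 𝕜 × 𝕜 => P q.1 q.2) (v 3 / v 0, v 2 / v 0)) :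
    DifferentiableAt 𝕜 (phaseFlux P a α) v :=
  (differentiableAt_phaseFlux hm hP).comp v
    ((differentiableAt_const α).prodMk differentiableAt_id)

theorem eventually_one_add_ne_zero : ∀ᶠ t : 𝕜 in nhds 0, 1 + t ≠ 0 :=
  (continuous_const_add 1).continuousAt.eventually_ne (by simp)

theorem hasLineDerivAt_phaseVelocity_self : HasLineDerivAt 𝕜 phaseVelocity 0 v v := by
  refine (hasDerivAt_const 0 (phaseVelocity v)).congr_of_eventuallyEq ?_
  filter_upwards [eventually_one_add_ne_zero] with t ht
  simp [phaseVelocity, ← one_add_mul, mul_div_mul_left _ _ ht]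

theorem hasLineDerivAt_phaseVelocity_momentum :
    HasLineDerivAt 𝕜 phaseVelocity (1 / v 0) v (Pi.single 1 1) := by
  have h := ((hasDerivAt_id (0 : 𝕜)).const_add (v 1)).div_const (v 0)
  simpa [HasLineDerivAt, phaseVelocity] using h

theorem hasLineDerivAt_phasePressure_momentum :
    HasLineDerivAt 𝕜 (phasePressure P a α) 0 v (Pi.single 1 1) := by
  simpa [HasLineDerivAt, phasePressure] using hasDerivAt_const 0 (phasePressure P a α v)

theorem hasLineDerivAt_phasePressure_self :
    HasLineDerivAt 𝕜 (phasePressure P a α) (α * a ^ 2 * (α / v 0)) v v := by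
  have hinv : HasDerivAt (fun t : 𝕜 => (1 + t)⁻¹) (-1) 0 := by
    simpa using ((hasDerivAt_id (0 : 𝕜)).const_add 1).fun_inv (by simp)
  have hline : HasDerivAt (fun t : 𝕜 => α * (P (v 3 / v 0) (v 2 / v 0)
      + a ^ 2 * (v 3 / v 0 - α / v 0 * (1 + t)⁻¹))) (α * a ^ 2 * (α / v 0)) 0 := by
    have h := ((((hinv.const_mul (α / v 0)).const_sub (v 3 / v 0)).const_mul (a ^ 2)).const_add
      (P (v 3 / v 0) (v 2 / v 0))).const_mul α
    exact h.congr_deriv (by ring)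
  refine hline.congr_of_eventuallyEq ?_
  filter_upwards [eventually_one_add_ne_zero] with t ht
  simp [phasePressure, ← one_add_mul, mul_div_mul_left _ _ ht, div_eq_mul_inv, mul_assoc]

theorem charpoly_fderiv_phaseFlux (hm : v 0 ≠ 0)
    (hP : DifferentiableAt 𝕜 (fun q : 𝕜 × 𝕜 => P q.1 q.2) (v 3 / v 0, v 2 / v 0)) :
    (LinearMap.toMatrix'
        (fderiv 𝕜 (phaseFlux P a α) v : (Fin 4 → 𝕜) →ₗ[𝕜] Fin 4 → 𝕜)).charpoly
      = (X - C (phaseVelocity v)) ^ 2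
        * ((X - C (phaseVelocity v)) ^ 2 - C ((a * (α / v 0)) ^ 2)) := by
  have hu : DifferentiableAt 𝕜 phaseVelocity v := differentiableAt_phaseVelocity hm
  have hp : DifferentiableAt 𝕜 (phasePressure P a α) v :=
    (differentiableAt_phasePressure hm hP).comp v
      ((differentiableAt_const α).prodMk differentiableAt_id)
  have hsound : fderiv 𝕜 phaseVelocity v (Pi.single 1 1) * fderiv 𝕜 (phasePressure P a α) v v
      = (a * (α / v 0)) ^ 2 := by
    rw [fderiv_apply_eq_of_hasLineDerivAt hu hasLineDerivAt_phaseVelocity_momentum,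
      fderiv_apply_eq_of_hasLineDerivAt hp hasLineDerivAt_phasePressure_self]
    ring
  rw [← hsound]
  exact charpoly_fderiv_smul_id_add_smul_const (by simp) hu hp
    (fderiv_apply_eq_of_hasLineDerivAt hu hasLineDerivAt_phaseVelocity_self)
    (fderiv_apply_eq_of_hasLineDerivAt hp hasLineDerivAt_phasePressure_momentum)

end Phase

section RelaxationSystem

/-- `phaseIndex k` lists the positions of the state `(m, q, S, T)` of phase `k` in the full state
vector; the phases are numbered from `0`. -/
def phaseIndex (k : Fin 2) : Fin 4 → Fin 9 :=
  ![![1, 3, 5, 7], ![2, 4, 6, 8]] k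

/-- The splitting of the full state vector into the volume fraction and the two phase states. -/
def relaxIndexEquiv : Fin 1 ⊕ (Fin 4 ⊕ Fin 4) ≃ Fin 9 where
  toFun := Sum.elim ![0] (Sum.elim (phaseIndex 0) (phaseIndex 1))
  invFun := ![.inl 0, .inr (.inl 0), .inr (.inr 0), .inr (.inl 1), .inr (.inr 1),
    .inr (.inl 2), .inr (.inr 2), .inr (.inl 3), .inr (.inr 3)]
  left_inv := by decide
  right_inv := by decide

/-- The volume fractions of the two phases in the state `V`. -/
def volumeFraction (V : Fin 9 → ℝ) : Fin 2 → ℝ :=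
  ![V 0, 1 - V 0]

theorem phaseIndex_ne_zero (k : Fin 2) (i : Fin 4) : phaseIndex k i ≠ 0 := by
  revert k i; decide

theorem phaseIndex_injective (k : Fin 2) : Function.Injective (phaseIndex k) := by
  revert k; decide

theorem phaseIndex_ne_phaseIndex {k l : Fin 2} (hkl : k ≠ l) (i j : Fin 4) :
    phaseIndex k i ≠ phaseIndex l j := by
  revert k l i j; decide

theorem charpoly_of_phases_decoupled {R : Type*} [CommRing R] {M : Matrix (Fin 9) (Fin 9) R}
    (h₀ : ∀ j, j ≠ 0 → M 0 j = 0)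
    (h : ∀ k l, k ≠ l → M.submatrix (phaseIndex k) (phaseIndex l) = 0) :
    M.charpoly = (X - C (M 0 0))
      * ∏ k, (M.submatrix (phaseIndex k) (phaseIndex k)).charpoly := by
  have hblock : Matrix.reindex relaxIndexEquiv.symm relaxIndexEquiv.symm M =
      Matrix.fromBlocks (Matrix.of fun _ _ => M 0 0) 0
        (Matrix.of fun i _ => M (relaxIndexEquiv (.inr i)) 0)
        (Matrix.fromBlocks (M.submatrix (phaseIndex 0) (phaseIndex 0)) 0 0
          (M.submatrix (phaseIndex 1) (phaseIndex 1))) := by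
    ext (i | i | i) (j | j | j)
    · rw [Subsingleton.elim i 0, Subsingleton.elim j 0]
      rfl
    · rw [Subsingleton.elim i 0]
      exact h₀ _ (phaseIndex_ne_zero 0 j)
    · rw [Subsingleton.elim i 0]
      exact h₀ _ (phaseIndex_ne_zero 1 j)
    · rw [Subsingleton.elim j 0]
      rfl
    · rfl
    · exact congr_fun₂ (h 0 1 zero_ne_one) i j
    · rw [Subsingleton.elim j 0]
      rfl
    · exact congr_fun₂ (h 1 0 one_ne_zero) i j
    · rfl
  rw [← Matrix.charpoly_reindex relaxIndexEquiv.symm M, hblock, Matrix.charpoly_fromBlocks_zero₁₂,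
    Matrix.charpoly_fromBlocks_zero₁₂, Fin.prod_univ_two]
  simp [Matrix.charpoly, Matrix.charmatrix]

variable {P : Fin 2 → ℝ → ℝ → ℝ} {a : Fin 2 → ℝ} {W : Fin 9 → ℝ}

theorem relaxFlux_comp_phaseIndex (V : Fin 9 → ℝ) (k : Fin 2) :
    relaxFlux (P 0) (P 1) (a 0) (a 1) V ∘ phaseIndex k
      = phaseFlux (P k) (a k) (volumeFraction V k) (V ∘ phaseIndex k) := by
  ext i
  fin_cases k <;> fin_cases i <;>
    simp [relaxFlux, phaseIndex, phaseFlux, phaseVelocity, phasePressure, volumeFraction] <;>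
    field_simp

theorem differentiableAt_relaxFlux (hm : ∀ k, W (phaseIndex k 0) ≠ 0)
    (hP : ∀ k, DifferentiableAt ℝ (fun q : ℝ × ℝ => P k q.1 q.2)
      (W (phaseIndex k 3) / W (phaseIndex k 0), W (phaseIndex k 2) / W (phaseIndex k 0))) :
    DifferentiableAt ℝ (relaxFlux (P 0) (P 1) (a 0) (a 1)) W := by
  have hvol (k : Fin 2) : DifferentiableAt ℝ (fun V => volumeFraction V k) W := by
    fin_cases k
    · exact differentiableAt_apply 0 W
    · exact (differentiableAt_apply 0 W).const_sub 1
  have hphase (k : Fin 2) : DifferentiableAt ℝ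
      (fun V => relaxFlux (P 0) (P 1) (a 0) (a 1) V ∘ phaseIndex k) W := by
    simp only [relaxFlux_comp_phaseIndex]
    exact (differentiableAt_phaseFlux (v := W ∘ phaseIndex k) (hm k) (hP k)).comp W
      (f := fun V => (volumeFraction V k, V ∘ phaseIndex k))
      ((hvol k).prodMk (differentiableAt_pi.2 fun i => differentiableAt_apply (phaseIndex k i) W))
  refine differentiableAt_pi.2 (relaxIndexEquiv.forall_congr_right.1 ?_)
  rintro (i | i | i)
  · rw [Subsingleton.elim i 0]
    exact differentiableAt_const 0
  · exact differentiableAt_pi.1 (hphase 0) i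
  · exact differentiableAt_pi.1 (hphase 1) i

theorem fderiv_relaxFlux_apply_zero
    (hg : DifferentiableAt ℝ (relaxFlux (P 0) (P 1) (a 0) (a 1)) W) (w : Fin 9 → ℝ) :
    fderiv ℝ (relaxFlux (P 0) (P 1) (a 0) (a 1)) W w 0 = 0 :=
  (hasDerivAt_pi.1 (hg.hasFDerivAt.hasLineDerivAt w) 0).unique (hasDerivAt_const 0 0)

theorem fderiv_relaxFlux_comp_phaseIndex
    (hg : DifferentiableAt ℝ (relaxFlux (P 0) (P 1) (a 0) (a 1)) W) {k : Fin 2}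
    (hF : DifferentiableAt ℝ (phaseFlux (P k) (a k) (volumeFraction W k)) (W ∘ phaseIndex k))
    {w : Fin 9 → ℝ} (hw : w 0 = 0) :
    fderiv ℝ (relaxFlux (P 0) (P 1) (a 0) (a 1)) W w ∘ phaseIndex k
      = fderiv ℝ (phaseFlux (P k) (a k) (volumeFraction W k)) (W ∘ phaseIndex k)
          (w ∘ phaseIndex k) := by
  refine fderiv_apply_comp_eq_of_line hg hF fun t => ?_
  have hvol : volumeFraction (W + t • w) = volumeFraction W := by simp [volumeFraction, hw]
  rw [relaxFlux_comp_phaseIndex, hvol]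
  rfl

/-- The matrix `Dg(W) + d(W)` of the quasilinear relaxation system, for an arbitrary interfacial
pressure `p` and an arbitrary interfacial velocity `w`. -/
def relaxMatrix (P₁ P₂ : ℝ → ℝ → ℝ) (a₁ a₂ : ℝ) (W : Fin 9 → ℝ) (p w : ℝ) :
    Matrix (Fin 9) (Fin 9) ℝ :=
  LinearMap.toMatrix'
    (fderiv ℝ (relaxFlux P₁ P₂ a₁ a₂) W : (Fin 9 → ℝ) →ₗ[ℝ] Fin 9 → ℝ) + relaxNc p w

theorem relaxMatrix_apply_of_ne_zero (P₁ P₂ : ℝ → ℝ → ℝ) (a₁ a₂ p w : ℝ) (i : Fin 9) {j : Fin 9}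
    (hj : j ≠ 0) :
    relaxMatrix P₁ P₂ a₁ a₂ W p w i j
      = fderiv ℝ (relaxFlux P₁ P₂ a₁ a₂) W (Pi.single j 1) i := by
  simp [relaxMatrix, relaxNc, hj, LinearMap.toMatrix'_apply]

theorem relaxMatrix_zero_zero (hg : DifferentiableAt ℝ (relaxFlux (P 0) (P 1) (a 0) (a 1)) W)
    (p w : ℝ) : relaxMatrix (P 0) (P 1) (a 0) (a 1) W p w 0 0 = w := by
  simp [relaxMatrix, relaxNc, LinearMap.toMatrix'_apply, fderiv_relaxFlux_apply_zero hg]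

theorem relaxMatrix_submatrix (p w : ℝ)
    (hg : DifferentiableAt ℝ (relaxFlux (P 0) (P 1) (a 0) (a 1)) W) {k : Fin 2}
    (hF : DifferentiableAt ℝ (phaseFlux (P k) (a k) (volumeFraction W k)) (W ∘ phaseIndex k))
    (l : Fin 2) :
    (relaxMatrix (P 0) (P 1) (a 0) (a 1) W p w).submatrix (phaseIndex k) (phaseIndex l)
      = if k = l then LinearMap.toMatrix'
          (fderiv ℝ (phaseFlux (P k) (a k) (volumeFraction W k)) (W ∘ phaseIndex k) :
            (Fin 4 → ℝ) →ₗ[ℝ] Fin 4 → ℝ)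
        else 0 := by
  ext i j
  have hentry : relaxMatrix (P 0) (P 1) (a 0) (a 1) W p w (phaseIndex k i) (phaseIndex l j)
      = fderiv ℝ (phaseFlux (P k) (a k) (volumeFraction W k)) (W ∘ phaseIndex k)
          (Pi.single (phaseIndex l j) 1 ∘ phaseIndex k) i := by
    rw [relaxMatrix_apply_of_ne_zero _ _ _ _ _ _ _ (phaseIndex_ne_zero l j),
      ← fderiv_relaxFlux_comp_phaseIndex hg hF
        (Pi.single_eq_of_ne (phaseIndex_ne_zero l j).symm _), Function.comp_apply]
  rw [Matrix.submatrix_apply, hentry]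
  split_ifs with hkl
  · subst hkl
    rw [single_comp_of_injective (phaseIndex_injective k), LinearMap.toMatrix'_apply]
    rfl
  · rw [single_comp_eq_zero fun i => phaseIndex_ne_phaseIndex hkl i j, map_zero]
    rfl

theorem charpoly_relaxMatrix (hm : ∀ k, W (phaseIndex k 0) ≠ 0)
    (hP : ∀ k, DifferentiableAt ℝ (fun q : ℝ × ℝ => P k q.1 q.2)
      (W (phaseIndex k 3) / W (phaseIndex k 0), W (phaseIndex k 2) / W (phaseIndex k 0)))
    (p w : ℝ) :
    (relaxMatrix (P 0) (P 1) (a 0) (a 1) W p w).charpoly = (X - C w)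
      * ∏ k, (X - C (phaseVelocity (W ∘ phaseIndex k))) ^ 2
        * ((X - C (phaseVelocity (W ∘ phaseIndex k))) ^ 2
          - C ((a k * (volumeFraction W k / W (phaseIndex k 0))) ^ 2)) := by
  have hg : DifferentiableAt ℝ (relaxFlux (P 0) (P 1) (a 0) (a 1)) W :=
    differentiableAt_relaxFlux hm hP
  have hsub (k l : Fin 2) := relaxMatrix_submatrix p w hg
    (differentiableAt_phaseFlux_right (v := W ∘ phaseIndex k) (hm k) (hP k)) l
  rw [charpoly_of_phases_decoupled, relaxMatrix_zero_zero hg]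
  · refine congrArg _ (Finset.prod_congr rfl fun k _ => ?_)
    rw [hsub, if_pos rfl]
    exact charpoly_fderiv_phaseFlux (v := W ∘ phaseIndex k) (hm k) (hP k)
  · intro j hj
    rw [relaxMatrix_apply_of_ne_zero _ _ _ _ _ _ _ hj, fderiv_relaxFlux_apply_zero hg]
  · intro k l hkl
    rw [hsub, if_neg hkl]

theorem isRoot_sub_sq_sub_sq_iff {R : Type*} [CommRing R] [IsDomain R] {u c r : R} :
    ((X - C u) ^ 2 - C (c ^ 2)).IsRoot r ↔ r = u - c ∨ r = u + c := by
  have hfactor : (r - u) ^ 2 - c ^ 2 = (r - (u - c)) * (r - (u + c)) := by ring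
  simp only [IsRoot.def, eval_sub, eval_pow, eval_X, eval_C, hfactor, mul_eq_zero, sub_eq_zero]

theorem relax_characteristic_polynomial_general
    (P₁ P₂ : ℝ → ℝ → ℝ) (a₁ a₂ : ℝ) (W : Fin 9 → ℝ) (hm₁ : W 1 ≠ 0) (hm₂ : W 2 ≠ 0)
    (τ₁ τ₂ u₁ u₂ : ℝ) (hτ₁ : τ₁ = W 0 / W 1) (hτ₂ : τ₂ = (1 - W 0) / W 2)
    (hu₁ : u₁ = W 3 / W 1) (hu₂ : u₂ = W 4 / W 2)
    (hP₁ : DifferentiableAt ℝ (fun q : ℝ × ℝ => P₁ q.1 q.2) (W 7 / W 1, W 5 / W 1))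
    (hP₂ : DifferentiableAt ℝ (fun q : ℝ × ℝ => P₂ q.1 q.2) (W 8 / W 2, W 6 / W 2))
    (p w : ℝ) :
    (relaxMatrix P₁ P₂ a₁ a₂ W p w).charpoly
        = (X - C w) * (X - C u₂) ^ 2 * (X - C u₁) ^ 2
          * ((X - C u₁) ^ 2 - C ((a₁ * τ₁) ^ 2))
          * ((X - C u₂) ^ 2 - C ((a₂ * τ₂) ^ 2))
    ∧ spectrum ℝ (relaxMatrix P₁ P₂ a₁ a₂ W p w)
        = {w, u₂, u₁, u₁ - a₁ * τ₁, u₁ + a₁ * τ₁, u₂ - a₂ * τ₂, u₂ + a₂ * τ₂} := by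
  have hchar : (relaxMatrix P₁ P₂ a₁ a₂ W p w).charpoly
      = (X - C w) * (X - C u₂) ^ 2 * (X - C u₁) ^ 2
        * ((X - C u₁) ^ 2 - C ((a₁ * τ₁) ^ 2)) * ((X - C u₂) ^ 2 - C ((a₂ * τ₂) ^ 2)) := by
    subst hτ₁ hτ₂ hu₁ hu₂
    refine (charpoly_relaxMatrix (P := ![P₁, P₂]) (a := ![a₁, a₂])
      (Fin.forall_fin_two.2 ⟨hm₁, hm₂⟩) (Fin.forall_fin_two.2 ⟨hP₁, hP₂⟩) p w).trans ?_
    simp only [Fin.prod_univ_two, phaseVelocity, volumeFraction, phaseIndex, Function.comp_apply,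
      Matrix.cons_val]
    ring
  refine ⟨hchar, ?_⟩
  ext r
  simp only [Matrix.mem_spectrum_iff_isRoot_charpoly, hchar, root_mul, isRoot_sub_sq_sub_sq_iff]
  simp only [IsRoot.def, eval_pow, eval_sub, eval_X, eval_C, sub_eq_zero,
    pow_eq_zero_iff two_ne_zero, Set.mem_insert_iff, Set.mem_singleton_iff, or_assoc]

end RelaxationSystem

/-- the characteristic polynomial of `A = Dg(W) + d(W)` for the
relaxation system equals
`(X−u₂)³(X−u₁)²((X−u₁)² − a₁²τ₁²)((X−u₂)² − a₂²τ₂²)`; in particular the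
eigenvalues of `A` are `u₂` (multiplicity 3), `u₁` (multiplicity 2),
`u₁ ± a₁τ₁` and `u₂ ± a₂τ₂`, all real. -/
theorem relax_characteristic_polynomial
    (P₁ P₂ : ℝ → ℝ → ℝ) (a₁ a₂ : ℝ) (ha₁ : 0 < a₁) (ha₂ : 0 < a₂)
    (W : Fin 9 → ℝ)
    (hα : 0 < W 0) (hα' : W 0 < 1) (hm₁ : 0 < W 1) (hm₂ : 0 < W 2)
    (τ₁ τ₂ u₁ u₂ s₁ s₂ T₁ T₂ π₁ π₂ : ℝ)
    (hτ₁ : τ₁ = W 0 / W 1) (hτ₂ : τ₂ = (1 - W 0) / W 2)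
    (hu₁ : u₁ = W 3 / W 1) (hu₂ : u₂ = W 4 / W 2)
    (hs₁ : s₁ = W 5 / W 1) (hs₂ : s₂ = W 6 / W 2)
    (hT₁ : T₁ = W 7 / W 1) (hT₂ : T₂ = W 8 / W 2)
    (hπ₁ : π₁ = P₁ T₁ s₁ + a₁ ^ 2 * (T₁ - τ₁))
    (hπ₂ : π₂ = P₂ T₂ s₂ + a₂ ^ 2 * (T₂ - τ₂))
    (hP₁ : DifferentiableAt ℝ (fun q : ℝ × ℝ => P₁ q.1 q.2) (T₁, s₁))
    (hP₂ : DifferentiableAt ℝ (fun q : ℝ × ℝ => P₂ q.1 q.2) (T₂, s₂))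
    (A : Matrix (Fin 9) (Fin 9) ℝ)
    (hA : A = LinearMap.toMatrix'
        ((fderiv ℝ (relaxFlux P₁ P₂ a₁ a₂) W : (Fin 9 → ℝ) →L[ℝ] (Fin 9 → ℝ))
          : (Fin 9 → ℝ) →ₗ[ℝ] (Fin 9 → ℝ))
        + relaxNc π₁ u₂) :
    A.charpoly
        = (X - C u₂) ^ 3 * (X - C u₁) ^ 2
          * ((X - C u₁) ^ 2 - C ((a₁ * τ₁) ^ 2))
          * ((X - C u₂) ^ 2 - C ((a₂ * τ₂) ^ 2))
    ∧ spectrum ℝ A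
        = ({u₂, u₁, u₁ - a₁ * τ₁, u₁ + a₁ * τ₁,
            u₂ - a₂ * τ₂, u₂ + a₂ * τ₂} : Set ℝ) := by
  subst hτ₁ hτ₂ hs₁ hs₂ hT₁ hT₂ hA
  obtain ⟨hchar, hspec⟩ := relax_characteristic_polynomial_general P₁ P₂ a₁ a₂ W hm₁.ne' hm₂.ne'
    _ _ _ _ rfl rfl hu₁ hu₂ hP₁ hP₂ π₁ u₂
  exact ⟨hchar.trans (by ring), hspec.trans (Set.insert_idem _ _)⟩
end
end
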